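/- arXiv:1903.01761 — 3 statements merged into one kernel-verified Lean document; each statement's English description precedes it below -/
import Mathlib

section
/- Let K be a compact Hausdorff topological space without isolated points, let E be a finite-dimensional subspace of C(K) (real-valued continuous functions with the sup norm) and let ε > 0. Then the set A = {g ∈ S_{C(K)} : ‖f + λg‖ > (1 − ε)(‖f‖ + |λ|) for all f ∈ E and all λ ∈ ℝ} is weakly sequentially dense in B_{C(K)}: for every h ∈ B_{C(K)} there exists a sequence (gₙ) in A converging weakly to h. -/
open Filter

/-- In a space where every nonempty open set is infinite, an open set meeting each member of a
finite family of open sets contains two disjoint finite sets that do so as well. -/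
lemma exists_disjoint_finite_meeting {K : Type*} [TopologicalSpace K]
    (hinf : ∀ U : Set K, IsOpen U → U.Nonempty → U.Infinite)
    {𝒰 : Set (Set K)} (hfin : 𝒰.Finite) (hopen : ∀ U ∈ 𝒰, IsOpen U)
    {W : Set K} (hW : IsOpen W) (hmeet : ∀ U ∈ 𝒰, (W ∩ U).Nonempty) :
    ∃ P Q : Set K, P.Finite ∧ Q.Finite ∧ Disjoint P Q ∧ P ⊆ W ∧ Q ⊆ W ∧
      (∀ U ∈ 𝒰, (P ∩ U).Nonempty) ∧ ∀ U ∈ 𝒰, (Q ∩ U).Nonempty := by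
  have := hfin.to_subtype
  choose p hp using fun U : 𝒰 => hmeet U U.2
  have hPfin : (Set.range p).Finite := Set.finite_range p
  have hdiff : ∀ U : 𝒰, ((W ∩ U) \ Set.range p).Nonempty := fun U =>
    ((hinf _ (hW.inter (hopen U U.2)) (hmeet U U.2)).sdiff hPfin).nonempty
  choose q hq using hdiff
  refine ⟨Set.range p, Set.range q, hPfin, Set.finite_range q, ?_, ?_, ?_, ?_, ?_⟩
  · rw [Set.disjoint_right]
    rintro _ ⟨U, rfl⟩
    exact (hq U).2
  · rintro _ ⟨U, rfl⟩
    exact (hp U).1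
  · rintro _ ⟨U, rfl⟩
    exact (hq U).1.1
  · exact fun U hU => ⟨p ⟨U, hU⟩, ⟨_, rfl⟩, (hp ⟨U, hU⟩).2⟩
  · exact fun U hU => ⟨q ⟨U, hU⟩, ⟨_, rfl⟩, (hq ⟨U, hU⟩).1.2⟩

/-- A finite family of nonempty open sets in a Hausdorff space whose nonempty open sets are
infinite admits a sequence of pairwise disjoint open sets each of which meets every member. -/
lemma exists_seq_isOpen_pairwise_disjoint_meeting {K : Type*} [TopologicalSpace K] [T2Space K]
    (hinf : ∀ U : Set K, IsOpen U → U.Nonempty → U.Infinite)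
    {𝒰 : Set (Set K)} (hfin : 𝒰.Finite) (hopen : ∀ U ∈ 𝒰, IsOpen U)
    (hne : ∀ U ∈ 𝒰, U.Nonempty) :
    ∃ W : ℕ → Set K, (∀ n, IsOpen (W n)) ∧ (∀ n, ∀ U ∈ 𝒰, (W n ∩ U).Nonempty) ∧
      Pairwise (Function.onFun Disjoint W) := by
  let S := {G : Set K // IsOpen G ∧ ∀ U ∈ 𝒰, (G ∩ U).Nonempty}
  have split : ∀ G : S, ∃ V G' : S, V.1 ⊆ G.1 ∧ G'.1 ⊆ G.1 ∧ Disjoint V.1 G'.1 := by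
    rintro ⟨G, hG, hm⟩
    obtain ⟨P, Q, hPf, hQf, hPQ, hPG, hQG, hP, hQ⟩ :=
      exists_disjoint_finite_meeting hinf hfin hopen hG hm
    obtain ⟨A, B, hA, hB, hPA, hQB, hAB⟩ :=
      SeparatedNhds.of_isCompact_isCompact hPf.isCompact hQf.isCompact hPQ
    refine ⟨⟨A ∩ G, hA.inter hG, fun U hU => (hP U hU).mono ?_⟩,
      ⟨B ∩ G, hB.inter hG, fun U hU => (hQ U hU).mono ?_⟩,
      Set.inter_subset_right, Set.inter_subset_right,
      hAB.mono Set.inter_subset_left Set.inter_subset_left⟩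
    · exact Set.inter_subset_inter_left _ (Set.subset_inter hPA hPG)
    · exact Set.inter_subset_inter_left _ (Set.subset_inter hQB hQG)
  choose V N hV hN hVN using split
  let G₀ : S := ⟨Set.univ, isOpen_univ, fun U hU => by simpa using hne U hU⟩
  let G : ℕ → S := fun n => N^[n] G₀
  have hG : ∀ n, G (n + 1) = N (G n) := fun n => Function.iterate_succ_apply' N n G₀
  have hanti : Antitone fun n => (G n).1 := antitone_nat_of_succ_le fun n => by
    simpa only [hG] using hN (G n)
  refine ⟨fun n => (V (G n)).1, fun n => (V (G n)).2.1, fun n => (V (G n)).2.2, ?_⟩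
  refine (pairwise_disjoint_on _).2 fun m n hmn => (hVN (G m)).mono_right ?_
  rw [← hG]
  exact (hV (G n)).trans (hanti hmn)

/-- A function of norm at most one can be modified on an open set `W` so as to take the values
`1` and `-1` on prescribed disjoint finite subsets of `W`, without leaving the unit ball. -/
lemma exists_modification {K : Type*} [TopologicalSpace K] [CompactSpace K] [T2Space K]
    {h : C(K, ℝ)} (hh : ‖h‖ ≤ 1) {W P Q : Set K} (hW : IsOpen W) (hPf : P.Finite)
    (hQf : Q.Finite) (hPQ : Disjoint P Q) (hPW : P ⊆ W) (hQW : Q ⊆ W) :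
    ∃ g : C(K, ℝ), ‖g‖ ≤ 1 ∧ (∀ t ∈ P, g t = 1) ∧ (∀ t ∈ Q, g t = -1) ∧
      ∀ t ∉ W, g t = h t := by
  obtain ⟨u, hu0, hu1, hu⟩ := exists_continuous_zero_one_of_isClosed hW.isClosed_compl
    (hPf.union hQf).isClosed
    (Set.disjoint_compl_left_iff_subset.2 (Set.union_subset hPW hQW))
  obtain ⟨v, hv0, hv1, hv⟩ :=
    exists_continuous_zero_one_of_isClosed hQf.isClosed hPf.isClosed hPQ.symm
  have key : ∀ t, ((1 - u) * h + u * (v + v - 1)) t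
      = (1 - u t) * h t + u t * (v t + v t - 1) := fun t => by
    simp
  refine ⟨(1 - u) * h + u * (v + v - 1), ?_, fun t ht => ?_, fun t ht => ?_, fun t ht => ?_⟩
  · rw [ContinuousMap.norm_le _ zero_le_one]
    intro t
    have h1 := abs_le.1 ((h.norm_coe_le_norm t).trans hh)
    obtain ⟨a, b⟩ := hu t
    obtain ⟨c, d⟩ := hv t
    rw [key, Real.norm_eq_abs, abs_le]
    constructor <;> nlinarith
  · rw [key, hu1 (Or.inl ht), hv1 ht]
    norm_num
  · rw [key, hu1 (Or.inr ht), hv0 ht]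
    norm_num
  · rw [key, hu0 ht]
    norm_num

/-- A uniformly bounded sequence in `C(K)` whose terms vanish off pairwise disjoint sets is
weakly null. -/
lemma tendsto_zero_of_pairwise_disjoint_support {K : Type*} [TopologicalSpace K]
    [CompactSpace K] {d : ℕ → C(K, ℝ)} {C : ℝ} (hd : ∀ n, ‖d n‖ ≤ C) {W : ℕ → Set K}
    (hW : Pairwise (Function.onFun Disjoint W)) (hdW : ∀ n, ∀ t ∉ W n, d n t = 0)
    (φ : C(K, ℝ) →L[ℝ] ℝ) : Tendsto (fun n => φ (d n)) atTop (nhds 0) := by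
  have hC : 0 ≤ C := (norm_nonneg _).trans (hd 0)
  have hsum : Summable fun n => |φ (d n)| := by
    refine summable_of_sum_le (c := ‖φ‖ * C) (fun n => abs_nonneg _) fun F => ?_
    let a : ℕ → ℝ := fun n => SignType.sign (φ (d n))
    have ha : ∀ n, |a n| ≤ 1 := fun n => by
      rcases lt_trichotomy (φ (d n)) 0 with h | h | h <;> simp [a, h]
    have hnorm : ‖∑ n ∈ F, a n • d n‖ ≤ C := by
      rw [ContinuousMap.norm_le _ hC]
      intro t
      rw [ContinuousMap.sum_apply]
      by_cases ht : ∃ m ∈ F, t ∈ W m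
      · obtain ⟨m, hm, htm⟩ := ht
        rw [Finset.sum_eq_single_of_mem m hm fun n _ hnm => by
          simp [hdW n t (Set.disjoint_right.1 (hW hnm) htm)]]
        calc ‖(a m • d m) t‖ = |a m| * ‖d m t‖ := by simp
          _ ≤ 1 * C := by
            gcongr
            exacts [ha m, ((d m).norm_coe_le_norm t).trans (hd m)]
          _ = C := one_mul C
      · push Not at ht
        rw [Finset.sum_eq_zero fun n hn => by simp [hdW n t (ht n hn)]]
        simpa using hC
    calc ∑ n ∈ F, |φ (d n)| = φ (∑ n ∈ F, a n • d n) := by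
          simp [a, map_sum, sign_mul_self]
      _ ≤ ‖φ (∑ n ∈ F, a n • d n)‖ := le_abs_self _
      _ ≤ ‖φ‖ * ‖∑ n ∈ F, a n • d n‖ := φ.le_opNorm _
      _ ≤ ‖φ‖ * C := by gcongr
  exact (tendsto_zero_iff_abs_tendsto_zero _).2 hsum.tendsto_atTop_zero

/-- For a finite-dimensional subspace of `C(K)` there are finitely many nonempty open sets such
that each function in the subspace almost attains its norm, with constant sign, throughout one
of them. -/
lemma exists_finite_open_almost_norming {K : Type*} [TopologicalSpace K] [CompactSpace K]
    [Nonempty K] (E : Subspace ℝ C(K, ℝ)) [FiniteDimensional ℝ E] {ε : ℝ} (hε : 0 < ε) :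
    ∃ 𝒰 : Set (Set K), 𝒰.Finite ∧ 𝒰.Nonempty ∧ (∀ U ∈ 𝒰, IsOpen U) ∧
      (∀ U ∈ 𝒰, U.Nonempty) ∧
      ∀ f ∈ E, ∃ U ∈ 𝒰, ∃ s : ℝ, (s = 1 ∨ s = -1) ∧ ∀ t ∈ U, (1 - ε) * ‖f‖ ≤ s * f t := by
  have attain : ∀ f : C(K, ℝ), ∃ s : ℝ, (s = 1 ∨ s = -1) ∧ ∃ t, s * f t = ‖f‖ := by
    intro f
    obtain ⟨t, -, ht⟩ := isCompact_univ.exists_isMaxOn Set.univ_nonempty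
      f.continuous.norm.continuousOn
    have hnorm : |f t| = ‖f‖ := le_antisymm (f.norm_coe_le_norm t)
      ((f.norm_le (abs_nonneg _)).2 fun x => ht (Set.mem_univ x))
    rcases abs_choice (f t) with h | h
    · exact ⟨1, Or.inl rfl, t, by linarith⟩
    · exact ⟨-1, Or.inr rfl, t, by linarith⟩
  choose s hs t₀ ht₀ using attain
  have : ProperSpace E := FiniteDimensional.proper ℝ E
  obtain ⟨T, hTS, hTf, hT⟩ :=
    (isCompact_sphere (0 : E) 1).finite_cover_balls (half_pos hε)
  let U : C(K, ℝ) → Set K := fun f => {t | 1 - ε / 2 < s f * f t}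
  refine ⟨insert Set.univ ((fun f : E => U f) '' T), (hTf.image _).insert _,
    Set.insert_nonempty _ _, ?_, ?_, ?_⟩
  · rintro _ (rfl | ⟨f, -, rfl⟩)
    · exact isOpen_univ
    · exact isOpen_lt continuous_const (continuous_const.mul f.1.continuous)
  · rintro _ (rfl | ⟨f, hf, rfl⟩)
    · exact Set.univ_nonempty
    · refine ⟨t₀ f, ?_⟩
      have h1 : ‖(f : C(K, ℝ))‖ = 1 := by simpa using hTS hf
      change 1 - ε / 2 < s f * f.1 (t₀ f)
      rw [ht₀, h1]
      linarith
  · intro f hf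
    by_cases h0 : f = 0
    · exact ⟨Set.univ, Or.inl rfl, 1, Or.inl rfl, by simp [h0]⟩
    have hpos : 0 < ‖f‖ := norm_pos_iff.2 h0
    have hmem : (‖f‖⁻¹ • ⟨f, hf⟩ : E) ∈ Metric.sphere (0 : E) 1 := by
      rw [mem_sphere_zero_iff_norm]
      change ‖‖f‖⁻¹ • f‖ = 1
      rw [norm_smul, norm_inv, norm_norm]
      exact inv_mul_cancel₀ hpos.ne'
    obtain ⟨e, heT, he⟩ := Set.mem_iUnion₂.1 (hT hmem)
    refine ⟨U e, Or.inr ⟨e, heT, rfl⟩, s e, hs e, fun t ht => ?_⟩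
    have hdist : ‖‖f‖⁻¹ • f - (e : C(K, ℝ))‖ < ε / 2 := by
      rw [Metric.mem_ball, dist_eq_norm] at he
      exact he
    have hpt : |‖f‖⁻¹ * f t - e.1 t| < ε / 2 :=
      ((‖f‖⁻¹ • f - (e : C(K, ℝ))).norm_coe_le_norm t).trans_lt hdist
    have ht' : 1 - ε / 2 < s e * e.1 t := ht
    have hkey : 1 - ε ≤ s e * (‖f‖⁻¹ * f t) := by
      obtain ⟨h1, h2⟩ := abs_lt.1 hpt
      rcases hs e with h | h <;> rw [h] at ht' ⊢ <;> linarith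
    calc (1 - ε) * ‖f‖ ≤ s e * (‖f‖⁻¹ * f t) * ‖f‖ := by gcongr
      _ = s e * f t := by field_simp

/-- for `K` compact Hausdorff without isolated points, a finite-dimensional
subspace `E ⊆ C(K)` and `ε > 0`, the set of unit vectors `g` that are `(1-ε)`-octahedral
with respect to `E` is weakly sequentially dense in the unit ball of `C(K)`. -/
theorem stmt6 {K : Type*} [TopologicalSpace K] [CompactSpace K] [T2Space K] [Nonempty K]
    (hK : ∀ t : K, ¬ IsOpen ({t} : Set K))
    (E : Subspace ℝ C(K, ℝ)) [FiniteDimensional ℝ E] (ε : ℝ) (hε : 0 < ε)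
    (h : C(K, ℝ)) (hh : ‖h‖ ≤ 1) :
    ∃ g : ℕ → C(K, ℝ),
      (∀ n, ‖g n‖ = 1 ∧ ∀ f ∈ E, ∀ l : ℝ, ‖f + l • g n‖ ≥ (1 - ε) * (‖f‖ + |l|)) ∧
      (∀ φ : C(K, ℝ) →L[ℝ] ℝ, Tendsto (fun n => φ (g n)) atTop (nhds (φ h))) := by
  have hinf : ∀ U : Set K, IsOpen U → U.Nonempty → U.Infinite := by
    rintro U hU ⟨x, hx⟩
    have : (nhdsWithin x {x}ᶜ).NeBot :=
      neBot_iff.2 fun hbot => hK x ((isOpen_singleton_iff_punctured_nhds x).2 hbot)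
    exact infinite_of_mem_nhds x (hU.mem_nhds hx)
  obtain ⟨𝒰, hfin, ⟨U₀, hU₀⟩, hopen, hne, hnorming⟩ := exists_finite_open_almost_norming E hε
  obtain ⟨W, hW, hmeet, hdisj⟩ :=
    exists_seq_isOpen_pairwise_disjoint_meeting hinf hfin hopen hne
  choose P Q hPf hQf hPQ hPW hQW hP hQ using fun n =>
    exists_disjoint_finite_meeting hinf hfin hopen (hW n) (hmeet n)
  choose g hg1 hgP hgQ hgW using fun n =>
    exists_modification hh (hW n) (hPf n) (hQf n) (hPQ n) (hPW n) (hQW n)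
  refine ⟨g, fun n => ⟨le_antisymm (hg1 n) ?_, fun f hf l => ?_⟩, fun φ => ?_⟩
  · obtain ⟨p, hp, -⟩ := hP n U₀ hU₀
    simpa [hgP n p hp] using (g n).norm_coe_le_norm p
  · obtain ⟨U, hU, s, hs, hsU⟩ := hnorming f hf
    obtain ⟨x, hxU, hx⟩ : ∃ x ∈ U, s * (l * g n x) = |l| := by
      obtain ⟨p, hp, hpU⟩ := hP n U hU
      obtain ⟨q, hq, hqU⟩ := hQ n U hU
      rcases hs with rfl | rfl <;> rcases abs_choice l with hl | hl <;> rw [hl]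
      · exact ⟨p, hpU, by simp [hgP n p hp]⟩
      · exact ⟨q, hqU, by simp [hgQ n q hq]⟩
      · exact ⟨q, hqU, by simp [hgQ n q hq]⟩
      · exact ⟨p, hpU, by simp [hgP n p hp]⟩
    have habs : s * (f x + l * g n x) ≤ |f x + l * g n x| := by
      rcases hs with rfl | rfl
      · simpa using le_abs_self _
      · simpa only [neg_one_mul] using neg_le_abs (f x + l * g n x)
    have hx' := hsU x hxU
    have hle : |f x + l * g n x| ≤ ‖f + l • g n‖ := (f + l • g n).norm_coe_le_norm x
    nlinarith [mul_nonneg hε.le (abs_nonneg l)]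
  · have hnull := tendsto_zero_of_pairwise_disjoint_support (d := fun n => g n - h) (C := 2)
      (fun n => (norm_sub_le _ _).trans (by linarith [hg1 n])) hdisj
      (fun n t ht => by simp [hgW n t ht]) φ
    simpa using hnull.add_const (φ h)
end

section
/- Let (Ω, Σ, μ) be a non-atomic measure space. Then L¹(μ) has the operator Daugavet property: for every f₁,…,fₙ ∈ S_{L¹(μ)}, every slice S of B_{L¹(μ)} and every ε > 0, there exists f ∈ S such that for every f′ ∈ B_{L¹(μ)} there is a bounded linear operator T : L¹(μ) → L¹(μ) with ‖T‖ ≤ 1 + ε, T(f) = f′, and ‖T(fᵢ) − fᵢ‖ < ε for all i. -/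
open MeasureTheory

/-- The operator Daugavet property. -/
def ODP (X : Type*) [NormedAddCommGroup X] [NormedSpace ℝ X] : Prop :=
  ∀ (n : ℕ) (x : Fin n → X), (∀ i, ‖x i‖ = 1) →
    ∀ f : X →L[ℝ] ℝ, f ≠ 0 → ∀ α > (0:ℝ), ∀ ε > (0:ℝ),
      ∃ z : X, ‖z‖ ≤ 1 ∧ f z > ‖f‖ - α ∧
        ∀ x' : X, ‖x'‖ ≤ 1 →
          ∃ T : X →L[ℝ] X, ‖T‖ ≤ 1 + ε ∧ T z = x' ∧ ∀ i, ‖T (x i) - x i‖ < ε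

namespace MeasureTheory

/-- Multiplication by the indicator function of a measurable set, as a linear map on `L¹`. -/
noncomputable def Lp.indicatorₗ {Ω : Type*} [MeasurableSpace Ω] {μ : Measure Ω} {A : Set Ω}
    (hA : MeasurableSet A) : Lp ℝ 1 μ →ₗ[ℝ] Lp ℝ 1 μ where
  toFun g := ((Lp.memLp g).indicator hA).toLp _
  map_add' g h := by
    rw [← MemLp.toLp_add, MemLp.toLp_eq_toLp_iff]
    filter_upwards [Lp.coeFn_add g h] with x hx
    by_cases hxA : x ∈ A
    · simpa [hxA] using hx
    · simp [hxA]
  map_smul' c g := by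
    rw [RingHom.id_apply, ← MemLp.toLp_const_smul, MemLp.toLp_eq_toLp_iff]
    filter_upwards [Lp.coeFn_smul c g] with x hx
    by_cases hxA : x ∈ A <;> simp [hxA, hx]

variable {Ω : Type*} [MeasurableSpace Ω] {μ : Measure Ω} {A B : Set Ω}

namespace Lp

lemma indicatorₗ_apply (hA : MeasurableSet A) (g : Lp ℝ 1 μ) :
    indicatorₗ hA g = ((Lp.memLp g).indicator hA).toLp _ :=
  rfl

lemma coeFn_indicatorₗ (hA : MeasurableSet A) (g : Lp ℝ 1 μ) :
    indicatorₗ hA g =ᵐ[μ] A.indicator g := by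
  rw [indicatorₗ_apply]
  exact MemLp.coeFn_toLp _

lemma norm_indicatorₗ (hA : MeasurableSet A) (g : Lp ℝ 1 μ) :
    ‖indicatorₗ hA g‖ = ∫ x in A, ‖g x‖ ∂μ := by
  rw [L1.norm_eq_integral_norm, ← integral_indicator hA]
  refine integral_congr_ae ?_
  filter_upwards [coeFn_indicatorₗ hA g] with x hx
  rw [hx, norm_indicator_eq_indicator_norm]

lemma indicatorₗ_union (hA : MeasurableSet A) (hB : MeasurableSet B) (hAB : Disjoint A B)
    (g : Lp ℝ 1 μ) :
    indicatorₗ (hA.union hB) g = indicatorₗ hA g + indicatorₗ hB g := by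
  refine Lp.ext ?_
  filter_upwards [coeFn_indicatorₗ hA g, coeFn_indicatorₗ hB g,
    coeFn_indicatorₗ (hA.union hB) g, Lp.coeFn_add (indicatorₗ hA g) (indicatorₗ hB g)]
    with x h1 h2 h3 h4
  rw [h4, h3, Pi.add_apply, h1, h2, Set.indicator_union_of_disjoint hAB]

lemma indicatorₗ_univ (g : Lp ℝ 1 μ) : indicatorₗ MeasurableSet.univ g = g := by
  refine Lp.ext ?_
  filter_upwards [coeFn_indicatorₗ MeasurableSet.univ g] with x h1
  rw [h1, Set.indicator_univ]

lemma indicatorₗ_empty (g : Lp ℝ 1 μ) : indicatorₗ MeasurableSet.empty g = 0 := by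
  rw [← norm_eq_zero, norm_indicatorₗ, Measure.restrict_empty, integral_zero_measure]

lemma indicatorₗ_idem (hA : MeasurableSet A) (g : Lp ℝ 1 μ) :
    indicatorₗ hA (indicatorₗ hA g) = indicatorₗ hA g := by
  refine Lp.ext ?_
  filter_upwards [coeFn_indicatorₗ hA g, coeFn_indicatorₗ hA (indicatorₗ hA g)] with x h1 h2
  by_cases hx : x ∈ A <;> simp [h2, h1, hx]

lemma indicatorₗ_add_compl (hA : MeasurableSet A) (g : Lp ℝ 1 μ) :
    indicatorₗ hA g + indicatorₗ hA.compl g = g := by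
  rw [← indicatorₗ_union hA hA.compl disjoint_compl_right]
  simpa only [Set.union_compl_self] using indicatorₗ_univ g

lemma norm_indicatorₗ_add_norm_sub (hA : MeasurableSet A) (g : Lp ℝ 1 μ) :
    ‖g - indicatorₗ hA g‖ + ‖indicatorₗ hA g‖ = ‖g‖ := by
  have h : g - indicatorₗ hA g = indicatorₗ hA.compl g := by
    rw [sub_eq_iff_eq_add, add_comm, indicatorₗ_add_compl]
  rw [h, norm_indicatorₗ, norm_indicatorₗ, L1.norm_eq_integral_norm, add_comm,
    integral_add_compl hA (L1.integrable_coeFn g).norm]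

lemma sum_indicatorₗ {ι : Type*} {f : ι → Set Ω} (hf : ∀ i, MeasurableSet (f i))
    (hd : Pairwise (Function.onFun Disjoint f)) (s : Finset ι) (g : Lp ℝ 1 μ) :
    ∑ i ∈ s, indicatorₗ (hf i) g =
      indicatorₗ (s.measurableSet_biUnion fun i _ => hf i) g := by
  classical
  induction s using Finset.induction_on with
  | empty => simpa using (indicatorₗ_empty g).symm
  | insert a s ha ih =>
    rw [Finset.sum_insert ha, ih, ← indicatorₗ_union]
    · simp only [Finset.set_biUnion_insert]
    · rw [Set.disjoint_iUnion₂_right]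
      intro i hi
      exact hd (fun h => ha (h ▸ hi))

lemma hasSum_indicatorₗ {f : ℕ → Set Ω} (hf : ∀ i, MeasurableSet (f i))
    (hd : Pairwise (Function.onFun Disjoint f)) (g : Lp ℝ 1 μ) :
    HasSum (fun i => indicatorₗ (hf i) g) (indicatorₗ (MeasurableSet.iUnion hf) g) := by
  have hint : Integrable (fun x => ‖g x‖) μ := (L1.integrable_coeFn g).norm
  have hreal : HasSum (fun i => ∫ x in f i, ‖g x‖ ∂μ) (∫ x in ⋃ i, f i, ‖g x‖ ∂μ) :=
    hasSum_integral_iUnion hf hd hint.integrableOn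
  rw [HasSum, SummationFilter.unconditional_filter, tendsto_iff_norm_sub_tendsto_zero] at *
  refine hreal.congr fun s => ?_
  have hV : MeasurableSet (⋃ i ∈ s, f i) := s.measurableSet_biUnion fun i _ => hf i
  have hVU : ⋃ i ∈ s, f i ⊆ ⋃ i, f i := Set.iUnion₂_subset fun i _ => Set.subset_iUnion f i
  have hdiff : MeasurableSet ((⋃ i, f i) \ ⋃ i ∈ s, f i) := (MeasurableSet.iUnion hf).diff hV
  have hsplit : indicatorₗ (MeasurableSet.iUnion hf) g
      = indicatorₗ hV g + indicatorₗ hdiff g := by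
    rw [← indicatorₗ_union hV hdiff Set.disjoint_sdiff_right]
    simp only [Set.union_sdiff_cancel hVU]
  rw [sum_indicatorₗ hf hd, hsplit, sub_add_cancel_left, norm_neg, norm_indicatorₗ,
    setIntegral_sdiff hV hint.integrableOn hVU,
    integral_biUnion_finset s (fun i _ => hf i) (fun i _ j _ hij => hd hij)
      (fun i _ => hint.integrableOn), norm_sub_rev, Real.norm_of_nonneg]
  rw [← integral_biUnion_finset s (fun i _ => hf i) (fun i _ j _ hij => hd hij)
    (fun i _ => hint.integrableOn), ← setIntegral_sdiff hV hint.integrableOn hVU]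
  exact integral_nonneg fun x => norm_nonneg _

open Classical in
/-- The signed measure `A ↦ φ (g · 1_A)` attached to a functional `φ` on `L¹` and `g ∈ L¹`. -/
noncomputable def signedMeasureOfDual (φ : Lp ℝ 1 μ →L[ℝ] ℝ) (g : Lp ℝ 1 μ) :
    SignedMeasure Ω where
  measureOf' A := if hA : MeasurableSet A then φ (indicatorₗ hA g) else 0
  empty' := by simp [indicatorₗ_empty]
  not_measurable' A hA := by simp [hA]
  m_iUnion' f hf hd := by
    simpa [hf, MeasurableSet.iUnion hf] using φ.hasSum (hasSum_indicatorₗ hf hd g)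

lemma signedMeasureOfDual_apply (φ : Lp ℝ 1 μ →L[ℝ] ℝ) (g : Lp ℝ 1 μ) (hA : MeasurableSet A) :
    signedMeasureOfDual φ g A = φ (indicatorₗ hA g) :=
  dif_pos hA

end Lp

lemma withDensity_enorm_real (hA : MeasurableSet A) (g : Lp ℝ 1 μ) :
    (μ.withDensity fun x => ‖g x‖ₑ).real A = ‖Lp.indicatorₗ hA g‖ := by
  rw [Lp.norm_indicatorₗ, Measure.real, withDensity_apply _ hA,
    integral_norm_eq_lintegral_enorm (Lp.aestronglyMeasurable g).restrict]

instance isFiniteMeasure_withDensity_enorm (g : Lp ℝ 1 μ) :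
    IsFiniteMeasure (μ.withDensity fun x => ‖g x‖ₑ) :=
  isFiniteMeasure_withDensity (L1.integrable_coeFn g).2.ne

/-- If `φ g > c ‖g‖`, the same strict inequality holds for all nonzero restrictions of `g` to
subsets of some set of positive measure on which `g` does not vanish. -/
lemma exists_forall_subset_lt_dual (φ : Lp ℝ 1 μ →L[ℝ] ℝ) (g : Lp ℝ 1 μ) {c : ℝ}
    (hc : c * ‖g‖ < φ g) :
    ∃ B : Set Ω, MeasurableSet B ∧ 0 < μ B ∧ ∀ A (hA : MeasurableSet A), A ⊆ B → 0 < μ A →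
      c * ‖Lp.indicatorₗ hA g‖ < φ (Lp.indicatorₗ hA g) := by
  set κ := μ.withDensity fun x => ‖g x‖ₑ with hκ
  set s := Lp.signedMeasureOfDual φ g with hs
  have hsκ : VectorMeasure.AbsolutelyContinuous s κ.toENNRealVectorMeasure := by
    refine VectorMeasure.AbsolutelyContinuous.mk fun A hA h0 => ?_
    rw [Measure.toENNRealVectorMeasure_apply_measurable hA] at h0
    have h := withDensity_enorm_real hA g
    rw [← hκ, Measure.real, h0, ENNReal.toReal_zero] at h
    rw [hs, Lp.signedMeasureOfDual_apply φ g hA, norm_eq_zero.1 h.symm, map_zero]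
  set r := s.rnDeriv κ with hr
  have hrint : Integrable r κ := SignedMeasure.integrable_rnDeriv s κ
  have hrmeas : Measurable r := SignedMeasure.measurable_rnDeriv s κ
  have hsr : ∀ A (hA : MeasurableSet A), φ (Lp.indicatorₗ hA g) = ∫ x in A, r x ∂κ := by
    intro A hA
    rw [← withDensityᵥ_apply hrint hA, hr, SignedMeasure.withDensityᵥ_rnDeriv_eq s κ hsκ, hs,
      Lp.signedMeasureOfDual_apply φ g hA]
  have hgmeas : Measurable g := (Lp.stronglyMeasurable g).measurable
  have hB : MeasurableSet {x | c < r x} := measurableSet_lt measurable_const hrmeas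
  have hN : MeasurableSet {x | g x ≠ 0} := hgmeas (measurableSet_singleton 0).compl
  refine ⟨{x | c < r x} ∩ {x | g x ≠ 0}, hB.inter hN, ?_, fun A hA hAB hμA => ?_⟩
  · rw [pos_iff_ne_zero]
    intro h0
    have hle : ∀ᵐ x ∂κ, r x ≤ c := by
      have h1 : ∀ᵐ x ∂μ, ¬ (c < r x ∧ g x ≠ 0) := measure_eq_zero_iff_ae_notMem.1 h0
      rw [hκ, ae_withDensity_iff (by fun_prop)]
      filter_upwards [h1] with x hx hgx
      by_contra hcr
      exact hx ⟨not_le.1 hcr, by simpa using hgx⟩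
    have h2 : ∫ x, r x ∂κ ≤ ∫ _, c ∂κ := integral_mono_ae hrint (integrable_const c) hle
    have h3 := hsr Set.univ MeasurableSet.univ
    have h4 := withDensity_enorm_real MeasurableSet.univ g
    rw [Lp.indicatorₗ_univ, Measure.restrict_univ] at h3
    rw [Lp.indicatorₗ_univ, ← hκ] at h4
    rw [integral_const, h4, smul_eq_mul, mul_comm, ← h3] at h2
    exact absurd hc (not_lt.2 h2)
  · have hκA : κ A ≠ 0 := by
      intro h0
      rw [hκ, withDensity_apply _ hA, setLIntegral_eq_zero_iff hA (by fun_prop)] at h0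
      refine hμA.ne' (measure_eq_zero_iff_ae_notMem.2 ?_)
      filter_upwards [h0] with x hx hxA
      exact (hAB hxA).2 (by simpa using hx hxA)
    rw [hsr A hA, ← withDensity_enorm_real hA g, ← hκ, ← sub_pos, mul_comm, ← smul_eq_mul,
      ← setIntegral_const, ← integral_sub hrint.integrableOn (integrable_const c).integrableOn,
      setIntegral_pos_iff_support_of_nonneg_ae]
    · refine (pos_iff_ne_zero.2 hκA).trans_le (measure_mono fun x hx => ⟨?_, hx⟩)
      exact (sub_pos.2 (hAB hx).1).ne'
    · filter_upwards [ae_restrict_mem hA] with x hx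
      exact (sub_pos.2 (hAB hx).1).le
    · exact (hrint.sub (integrable_const c)).integrableOn

/-- In a non-atomic measure space, a set of positive measure contains a subset of positive measure
which is small for a given finite measure. -/
lemma exists_subset_pos_measure_lt
    (hμ : ∀ A : Set Ω, MeasurableSet A → 0 < μ A →
      ∃ B : Set Ω, MeasurableSet B ∧ B ⊆ A ∧ 0 < μ B ∧ μ B < μ A)
    (ν : Measure Ω) [IsFiniteMeasure ν] (hB : MeasurableSet B) (hμB : 0 < μ B)
    {δ : ℝ} (hδ : 0 < δ) :
    ∃ A ⊆ B, MeasurableSet A ∧ 0 < μ A ∧ ν.real A < δ := by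
  have key : ∀ n : ℕ, ∃ A ⊆ B, MeasurableSet A ∧ 0 < μ A ∧ ν.real A ≤ ν.real B * (1 / 2) ^ n := by
    intro n
    induction n with
    | zero => exact ⟨B, subset_rfl, hB, hμB, by simp⟩
    | succ n ih =>
      obtain ⟨A, hAB, hA, hμA, hνA⟩ := ih
      obtain ⟨C, hC, hCA, hμC, hlt⟩ := hμ A hA hμA
      have hadd := measureReal_sdiff_add_inter (μ := ν) (s := A) hC
      rw [Set.inter_eq_self_of_subset_right hCA] at hadd
      rcases le_total (ν.real C) (ν.real (A \ C)) with h | h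
      · exact ⟨C, hCA.trans hAB, hC, hμC, by rw [pow_succ]; linarith⟩
      · refine ⟨A \ C, Set.sdiff_subset.trans hAB, hA.diff hC, ?_, by rw [pow_succ]; linarith⟩
        exact (tsub_pos_of_lt hlt).trans_le le_measure_sdiff
  have hlim : Filter.Tendsto (fun n : ℕ => ν.real B * (1 / 2 : ℝ) ^ n) Filter.atTop (nhds 0) := by
    simpa using (tendsto_pow_atTop_nhds_zero_of_lt_one (r := (1 / 2 : ℝ)) (by norm_num)
      (by norm_num)).const_mul (ν.real B)
  obtain ⟨n, hn⟩ := (hlim.eventually (gt_mem_nhds hδ)).exists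
  obtain ⟨A, hAB, hA, hμA, hνA⟩ := key n
  exact ⟨A, hAB, hA, hμA, hνA.trans_lt hn⟩

/-- If `z` is a unit vector of `L¹` supported in `A`, and the functions `x i` are small on `A`,
then `z` can be mapped to any `x'` in the unit ball by a contraction almost fixing the `x i`. -/
lemma exists_contraction_apply_eq {ι : Type*} (hA : MeasurableSet A) {z : Lp ℝ 1 μ}
    (hz : ‖z‖ = 1) (hzA : Lp.indicatorₗ hA z = z) {x' : Lp ℝ 1 μ} (hx' : ‖x'‖ ≤ 1)
    {ε : ℝ} {x : ι → Lp ℝ 1 μ} (hx : ∀ i, ‖Lp.indicatorₗ hA (x i)‖ < ε / 2) :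
    ∃ T : Lp ℝ 1 μ →L[ℝ] Lp ℝ 1 μ, ‖T‖ ≤ 1 ∧ T z = x' ∧ ∀ i, ‖T (x i) - x i‖ < ε := by
  obtain ⟨ψ, hψ, hψz⟩ := exists_dual_vector'' ℝ z
  have hψx' : ∀ g, ‖ψ g • x'‖ ≤ ‖g‖ := fun g => by
    have h1 : ‖ψ g‖ ≤ ‖g‖ := ψ.le_of_opNorm_le hψ g |>.trans_eq (one_mul _)
    rw [norm_smul]
    exact (mul_le_of_le_one_right (norm_nonneg _) hx').trans h1
  let L : Lp ℝ 1 μ →ₗ[ℝ] Lp ℝ 1 μ :=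
    LinearMap.id - Lp.indicatorₗ hA + (ψ.toLinearMap ∘ₗ Lp.indicatorₗ hA).smulRight x'
  have hL : ∀ g, L g = g - Lp.indicatorₗ hA g + ψ (Lp.indicatorₗ hA g) • x' := fun g => rfl
  have hLb : ∀ g, ‖L g‖ ≤ 1 * ‖g‖ := fun g => by
    rw [hL, one_mul, ← Lp.norm_indicatorₗ_add_norm_sub hA g]
    exact (norm_add_le _ _).trans (by gcongr; exact hψx' _)
  refine ⟨L.mkContinuous 1 hLb, L.mkContinuous_norm_le zero_le_one hLb, ?_, fun i => ?_⟩
  · rw [LinearMap.mkContinuous_apply, hL, hzA, hψz, hz]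
    simp
  · have h : L (x i) - x i = ψ (Lp.indicatorₗ hA (x i)) • x' - Lp.indicatorₗ hA (x i) := by
      rw [hL]; abel
    rw [LinearMap.mkContinuous_apply, h]
    have h1 := norm_sub_le (ψ (Lp.indicatorₗ hA (x i)) • x') (Lp.indicatorₗ hA (x i))
    linarith [hψx' (Lp.indicatorₗ hA (x i)), hx i]

end MeasureTheory

/-- A functional on a normed space exceeds `c ‖z‖` at some `z` whenever `0 ≤ c < ‖f‖`. -/
lemma ContinuousLinearMap.exists_mul_norm_lt_apply {E : Type*} [NormedAddCommGroup E]
    [NormedSpace ℝ E] (f : E →L[ℝ] ℝ) {c : ℝ} (hc : 0 ≤ c) (hcf : c < ‖f‖) :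
    ∃ z, c * ‖z‖ < f z := by
  by_contra! h
  refine hcf.not_ge (f.opNorm_le_bound hc fun z => abs_le.2 ⟨?_, h z⟩)
  have := h (-z)
  rw [map_neg, norm_neg] at this
  linarith

/-- if `μ` is non-atomic then `L¹(μ)` has the operator Daugavet property. -/
theorem stmt10 {Ω : Type*} [MeasurableSpace Ω] (μ : Measure Ω)
    (hnonatomic : ∀ A : Set Ω, MeasurableSet A → 0 < μ A →
      ∃ B : Set Ω, MeasurableSet B ∧ B ⊆ A ∧ 0 < μ B ∧ μ B < μ A) :
    ODP (Lp ℝ 1 μ) := by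
  intro n x _ f hf α hα ε hε
  obtain ⟨g, hg⟩ := f.exists_mul_norm_lt_apply (c := max (‖f‖ - α) 0) (le_max_right _ _)
    (max_lt (by linarith) (norm_pos_iff.2 hf))
  obtain ⟨B, hB, hμB, hBf⟩ := exists_forall_subset_lt_dual f g hg
  let ν : Measure Ω := ∑ i, μ.withDensity fun ω => ‖x i ω‖ₑ
  obtain ⟨A, hAB, hA, hμA, hνA⟩ :=
    exists_subset_pos_measure_lt hnonatomic ν hB hμB (half_pos hε)
  have hx : ∀ i, ‖Lp.indicatorₗ hA (x i)‖ < ε / 2 := fun i => by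
    refine lt_of_le_of_lt ?_ hνA
    rw [← withDensity_enorm_real hA (x i)]
    refine ENNReal.toReal_mono (measure_ne_top _ _) ?_
    rw [Measure.finsetSum_apply]
    exact Finset.single_le_sum (f := fun i => (μ.withDensity fun ω => ‖x i ω‖ₑ) A)
      (fun _ _ => zero_le) (Finset.mem_univ i)
  have hw := hBf A hA hAB hμA
  set w := Lp.indicatorₗ hA g with hwdef
  have hw0 : 0 < ‖w‖ := by
    rw [norm_pos_iff]
    intro h
    simp [h] at hw
  have hz : ‖‖w‖⁻¹ • w‖ = 1 := by
    rw [norm_smul, norm_inv, norm_norm, inv_mul_cancel₀ hw0.ne']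
  refine ⟨‖w‖⁻¹ • w, hz.le, ?_, fun x' hx' => ?_⟩
  · rw [map_smul, smul_eq_mul, gt_iff_lt, inv_mul_eq_div]
    exact (le_max_left _ _).trans_lt ((lt_div_iff₀ hw0).2 hw)
  · have hzA : Lp.indicatorₗ hA (‖w‖⁻¹ • w) = ‖w‖⁻¹ • w := by
      rw [map_smul, hwdef, Lp.indicatorₗ_idem]
    obtain ⟨T, hT, hTz, hTx⟩ := exists_contraction_apply_eq hA hz hzA hx' hx
    exact ⟨T, hT.trans (by linarith), hTz, hTx⟩
end

section
/- Let X and Y be Banach spaces and suppose X ⊗̂_π Y has the Daugavet property. Then for every finite-dimensional subspace E ⊆ X ⊗̂_π Y, every slice S of B_{X ⊗̂_π Y}, every T ∈ L(X, Y*) and every ε > 0, there exist x ∈ S_X, y ∈ S_Y with x ⊗ y ∈ S and G ∈ L(X, Y*) such that G agrees with T on E, G(x)(y) = ‖T‖ and ‖G‖ ≤ (1 − ε)⁻¹‖T‖. -/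
/-- The Daugavet property in terms of slices of the unit ball. -/
def HasDaugavetSlices (Z : Type*) [NormedAddCommGroup Z] [NormedSpace ℝ Z] : Prop :=
  ∀ ε > (0:ℝ), ∀ z : Z, ‖z‖ = 1 → ∀ F : Z →L[ℝ] ℝ, F ≠ 0 → ∀ α > (0:ℝ),
    ∃ w : Z, ‖w‖ ≤ 1 ∧ F w > ‖F‖ - α ∧ ‖z + w‖ > 2 - ε

namespace HasDaugavetSlices

variable {Z : Type*} [NormedAddCommGroup Z] [NormedSpace ℝ Z]

/-- Every slice has a subslice all of whose elements are almost `ℓ₁`-orthogonal to a given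
unit vector, for nonnegative coefficients. -/
lemma exists_subslice (hZ : HasDaugavetSlices Z) {η : ℝ} (hη : 0 < η) (hη1 : η < 1)
    {z : Z} (hz : ‖z‖ = 1) {F : Z →L[ℝ] ℝ} (hF : F ≠ 0) {α : ℝ} (hα : 0 < α) :
    ∃ F' : Z →L[ℝ] ℝ, F' ≠ 0 ∧ ∃ α' > (0:ℝ), ∀ v : Z, ‖v‖ ≤ 1 → F' v > ‖F'‖ - α' →
      F v > ‖F‖ - α ∧ ∀ a b : ℝ, 0 ≤ a → 0 ≤ b → (1 - η) * (a + b) ≤ ‖a • z + b • v‖ := by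
  have hFn : 0 < ‖F‖ := norm_pos_iff.mpr hF
  obtain ⟨δ, hδ, hδη, hδα⟩ : ∃ δ > (0:ℝ), 3 * δ ≤ η ∧ ‖F‖ * (3 * δ) ≤ α := by
    refine ⟨min (η / 3) (α / ‖F‖ / 3), by positivity, ?_, ?_⟩
    · linarith [min_le_left (η / 3) (α / ‖F‖ / 3)]
    · have h : 3 * min (η / 3) (α / ‖F‖ / 3) ≤ α / ‖F‖ := by
        linarith [min_le_right (η / 3) (α / ‖F‖ / 3)]
      calc _ ≤ ‖F‖ * (α / ‖F‖) := by gcongr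
        _ = α := by field_simp
  obtain ⟨w, hw, hFw, hzw⟩ := hZ δ hδ z hz F hF (‖F‖ * δ) (by positivity)
  obtain ⟨f, hf, hfzw⟩ := exists_dual_vector ℝ (z + w) (by linarith)
  have hfle : ∀ v : Z, ‖v‖ ≤ 1 → f v ≤ 1 := fun v hv =>
    (le_abs_self _).trans (by simpa [hf] using f.le_of_opNorm_le_of_le hf.le hv)
  have hFle : ∀ v : Z, ‖v‖ ≤ 1 → ‖F‖⁻¹ * F v ≤ 1 := fun v hv => by
    rw [inv_mul_le_one₀ hFn]
    exact (le_abs_self _).trans (by simpa using F.le_of_opNorm_le_of_le le_rfl hv)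
  have hsum : f z + f w > 2 - δ := by
    rw [← map_add, hfzw]; exact hzw
  have hfz := hfle z hz.le
  have hfw := hfle w hw
  have hFw' : ‖F‖⁻¹ * F w > 1 - δ := by
    rw [gt_iff_lt, lt_inv_mul_iff₀ hFn]; linarith
  set F' : Z →L[ℝ] ℝ := ‖F‖⁻¹ • F + f with hF'
  have hF'v : ∀ v, F' v = ‖F‖⁻¹ * F v + f v := fun v => by simp [hF']
  have hnorm : 2 - 2 * δ < ‖F'‖ := by
    have h1 : F' w ≤ ‖F'‖ :=
      (le_abs_self _).trans (by simpa using F'.le_of_opNorm_le_of_le le_rfl hw)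
    rw [hF'v] at h1
    linarith
  refine ⟨F', norm_pos_iff.mp (by linarith), δ, hδ, fun v hv hFv => ?_⟩
  rw [hF'v] at hFv
  have hfv := hfle v hv
  have hFv' := hFle v hv
  constructor
  · have h : 1 - 3 * δ < ‖F‖⁻¹ * F v := by linarith
    rw [lt_inv_mul_iff₀ hFn] at h
    linarith
  · intro a b ha hb
    have h : f (a • z + b • v) ≤ ‖a • z + b • v‖ :=
      (le_abs_self _).trans (by simpa [hf] using f.le_opNorm (a • z + b • v))
    simp only [map_add, map_smul, smul_eq_mul] at h
    have h1 : a * (1 - η) ≤ a * f z := by gcongr; linarith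
    have h2 : b * (1 - η) ≤ b * f v := by gcongr; linarith
    linarith

lemma exists_subslice_finite (hZ : HasDaugavetSlices Z) {η : ℝ} (hη : 0 < η) (hη1 : η < 1)
    {N : Set Z} (hN : N.Finite) (hN1 : ∀ z ∈ N, ‖z‖ = 1) {F : Z →L[ℝ] ℝ} (hF : F ≠ 0)
    {α : ℝ} (hα : 0 < α) :
    ∃ F' : Z →L[ℝ] ℝ, F' ≠ 0 ∧ ∃ α' > (0:ℝ), ∀ v : Z, ‖v‖ ≤ 1 → F' v > ‖F'‖ - α' →
      F v > ‖F‖ - α ∧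
      ∀ z ∈ N, ∀ a b : ℝ, 0 ≤ a → 0 ≤ b → (1 - η) * (a + b) ≤ ‖a • z + b • v‖ := by
  induction N, hN using Set.Finite.induction_on with
  | empty => exact ⟨F, hF, α, hα, fun v _ h => ⟨h, by simp⟩⟩
  | @insert z N _ _ ih =>
    obtain ⟨F₁, hF₁, α₁, hα₁, h₁⟩ := ih fun z hz => hN1 z (Set.mem_insert_of_mem _ hz)
    obtain ⟨F₂, hF₂, α₂, hα₂, h₂⟩ :=
      hZ.exists_subslice hη hη1 (hN1 z (Set.mem_insert _ _)) hF₁ hα₁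
    refine ⟨F₂, hF₂, α₂, hα₂, fun v hv hFv => ?_⟩
    obtain ⟨hFv₁, hzv⟩ := h₂ v hv hFv
    obtain ⟨hFv₀, hNv⟩ := h₁ v hv hFv₁
    refine ⟨hFv₀, fun y hy => ?_⟩
    rcases Set.mem_insert_iff.mp hy with rfl | hy
    exacts [hzv, hNv y hy]

/-- Every slice has a subslice all of whose elements are almost `ℓ₁`-orthogonal to a given
finite-dimensional subspace. -/
lemma exists_subslice_finiteDimensional (hZ : HasDaugavetSlices Z) {η : ℝ} (hη : 0 < η)
    (hη1 : η < 1) (E : Submodule ℝ Z) [FiniteDimensional ℝ E] {F : Z →L[ℝ] ℝ} (hF : F ≠ 0)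
    {α : ℝ} (hα : 0 < α) :
    ∃ F' : Z →L[ℝ] ℝ, F' ≠ 0 ∧ ∃ α' > (0:ℝ), ∀ v : Z, ‖v‖ ≤ 1 → F' v > ‖F'‖ - α' →
      F v > ‖F‖ - α ∧ ∀ e ∈ E, ∀ c : ℝ, (1 - η) * (‖e‖ + |c|) ≤ ‖e + c • v‖ := by
  obtain ⟨z₀, hz₀⟩ : ∃ z₀ : Z, ‖z₀‖ = 1 := by
    obtain ⟨z, hz⟩ := DFunLike.ne_iff.mp hF
    have hz0 : z ≠ 0 := by rintro rfl; simp at hz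
    exact ⟨‖z‖⁻¹ • z, by simp [norm_smul, hz0]⟩
  have hK : IsCompact (E.subtype '' Metric.sphere (0 : E) 1) :=
    (isCompact_sphere (0 : E) 1).image E.subtypeL.continuous
  obtain ⟨N, hNK, hN, hcover⟩ := hK.finite_cover_balls (half_pos hη)
  have hN1 : ∀ z ∈ insert z₀ N, ‖z‖ = 1 := by
    intro z hz
    rcases Set.mem_insert_iff.mp hz with rfl | hz
    · exact hz₀
    · obtain ⟨e, he, rfl⟩ := hNK hz
      simpa using he
  obtain ⟨F', hF', α', hα', h⟩ :=
    hZ.exists_subslice_finite (half_pos hη) (by linarith) (hN.insert z₀) hN1 hF hα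
  refine ⟨F', hF', α', hα', fun v hv hFv => ?_⟩
  obtain ⟨hFv₀, hNv⟩ := h v hv hFv
  refine ⟨hFv₀, ?_⟩
  have key : ∀ e ∈ E, ∀ c : ℝ, 0 ≤ c → (1 - η) * (‖e‖ + c) ≤ ‖e + c • v‖ := by
    intro e he c hc
    rcases eq_or_ne e 0 with rfl | he0
    · have := hNv z₀ (Set.mem_insert _ _) 0 c le_rfl hc
      simp only [zero_smul, zero_add, norm_zero] at this ⊢
      nlinarith
    · have hen : 0 < ‖e‖ := norm_pos_iff.mpr he0
      have hmem : ‖e‖⁻¹ • e ∈ E.subtype '' Metric.sphere (0 : E) 1 :=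
        ⟨⟨‖e‖⁻¹ • e, E.smul_mem _ he⟩, by simp [norm_smul, he0], rfl⟩
      obtain ⟨z, hzN, hz⟩ := Set.mem_iUnion₂.mp (hcover hmem)
      rw [Metric.mem_ball, dist_comm, dist_eq_norm] at hz
      have h1 := hNv z (Set.mem_insert_of_mem _ hzN) ‖e‖ c hen.le hc
      have h2 : ‖e‖ • z + c • v = ‖e‖ • (z - ‖e‖⁻¹ • e) + (e + c • v) := by
        rw [smul_sub, smul_inv_smul₀ hen.ne']; abel
      have h3 := norm_add_le (‖e‖ • (z - ‖e‖⁻¹ • e)) (e + c • v)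
      rw [← h2, norm_smul, norm_norm] at h3
      nlinarith
  intro e he c
  rcases le_total 0 c with hc | hc
  · rw [abs_of_nonneg hc]
    exact key e he c hc
  · rw [abs_of_nonpos hc]
    have := key (-e) (E.neg_mem he) (-c) (by linarith)
    rwa [norm_neg, neg_smul, ← neg_add, norm_neg] at this

end HasDaugavetSlices

/-- If `v` is almost `ℓ₁`-orthogonal to `E`, a functional can be modified off `E` so as to take
the value `‖g‖` at `v`, with only a small increase of its norm. -/
lemma exists_dual_eqOn_and_apply_eq_norm {Z : Type*} [NormedAddCommGroup Z] [NormedSpace ℝ Z]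
    (E : Submodule ℝ Z) (v : Z) {ε : ℝ} (hε : ε < 1)
    (h : ∀ e ∈ E, ∀ c : ℝ, (1 - ε) * (‖e‖ + |c|) ≤ ‖e + c • v‖) (g : Z →L[ℝ] ℝ) :
    ∃ G : Z →L[ℝ] ℝ, (∀ e ∈ E, G e = g e) ∧ G v = ‖g‖ ∧ ‖G‖ ≤ (1 - ε)⁻¹ * ‖g‖ := by
  have hε' : 0 < 1 - ε := by linarith
  let L : E × ℝ →ₗ[ℝ] Z := E.subtype.coprod (LinearMap.toSpanSingleton ℝ Z v)
  have hL : ∀ p, L p = p.1 + p.2 • v := fun p => by simp [L]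
  have hinj : Function.Injective L := by
    rw [injective_iff_map_eq_zero]
    rintro ⟨e, c⟩ hp
    have h1 := h e e.2 c
    rw [hL] at hp
    rw [hp, norm_zero] at h1
    have h2 : ‖(e : Z)‖ + |c| ≤ 0 := by
      by_contra! hlt
      linarith [mul_pos hε' hlt]
    have h3 : ‖(e : Z)‖ = 0 := by linarith [norm_nonneg (e : Z), abs_nonneg c]
    have h4 : |c| = 0 := by linarith [norm_nonneg (e : Z), abs_nonneg c]
    ext <;> simp_all
  let e₀ := LinearEquiv.ofInjective L hinj
  let φ : E × ℝ →ₗ[ℝ] ℝ :=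
    (g.toLinearMap ∘ₗ E.subtype).coprod (LinearMap.toSpanSingleton ℝ ℝ ‖g‖)
  have hφ : ∀ p, φ p = g p.1 + p.2 * ‖g‖ := fun p => by simp [φ]
  let f : LinearMap.range L →L[ℝ] ℝ :=
    (φ ∘ₗ e₀.symm.toLinearMap).mkContinuous ((1 - ε)⁻¹ * ‖g‖) fun x => by
      obtain ⟨p, rfl⟩ := e₀.surjective x
      have h1 := h p.1 p.1.2 p.2
      have h2 : ‖e₀ p‖ = ‖(p.1 : Z) + p.2 • v‖ := by
        rw [← hL]; rfl
      rw [← h2, ← le_inv_mul_iff₀ hε'] at h1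
      calc ‖(φ ∘ₗ e₀.symm.toLinearMap) (e₀ p)‖ = ‖g p.1 + p.2 * ‖g‖‖ := by simp [hφ]
        _ ≤ ‖g p.1‖ + ‖p.2 * ‖g‖‖ := norm_add_le _ _
        _ ≤ ‖g‖ * ‖(p.1 : Z)‖ + |p.2| * ‖g‖ := by
          gcongr
          · exact g.le_opNorm _
          · simp
        _ = ‖g‖ * (‖(p.1 : Z)‖ + |p.2|) := by ring
        _ ≤ ‖g‖ * ((1 - ε)⁻¹ * ‖e₀ p‖) := by gcongr
        _ = (1 - ε)⁻¹ * ‖g‖ * ‖e₀ p‖ := by ring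
  have hf : ∀ p, f (e₀ p) = g p.1 + p.2 * ‖g‖ := fun p => by simp [f, hφ]
  obtain ⟨G, hG, hGn⟩ := exists_extension_norm_eq _ f
  have hGL : ∀ p, G (L p) = g p.1 + p.2 * ‖g‖ := fun p => (hG (e₀ p)).trans (hf p)
  refine ⟨G, fun e he => ?_, ?_, ?_⟩
  · simpa [hL] using hGL (⟨e, he⟩, 0)
  · simpa [hL] using hGL (0, 1)
  · rw [hGn]
    exact LinearMap.mkContinuous_norm_le _ (by positivity) _

/-- abstract formulation of the projective tensor product `Z = X ⊗̂_π Y`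
(as in Statement 14). If `Z` has the Daugavet property, then every `T ∈ L(X, Y*)` can be
extended from a finite-dimensional subspace `E` to `G` with `‖G‖ ≤ (1-ε)⁻¹‖T‖` attaining
the value `‖T‖` at an elementary tensor of any prescribed slice. -/
theorem stmt17 {X Y Z : Type*}
    [NormedAddCommGroup X] [NormedSpace ℝ X] [CompleteSpace X]
    [NormedAddCommGroup Y] [NormedSpace ℝ Y] [CompleteSpace Y]
    [NormedAddCommGroup Z] [NormedSpace ℝ Z] [CompleteSpace Z]
    (t : X →L[ℝ] Y →L[ℝ] Z)
    (hball : Metric.closedBall (0 : Z) 1 =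
      closure (convexHull ℝ {z : Z | ∃ x y, ‖x‖ = 1 ∧ ‖y‖ = 1 ∧ z = t x y}))
    (ι : (X →L[ℝ] Y →L[ℝ] ℝ) ≃ₗᵢ[ℝ] (Z →L[ℝ] ℝ))
    (hι : ∀ (G : X →L[ℝ] Y →L[ℝ] ℝ) (x : X) (y : Y), ι G (t x y) = G x y)
    (hDP : ∀ ε > (0:ℝ), ∀ z : Z, ‖z‖ = 1 → ∀ F : Z →L[ℝ] ℝ, F ≠ 0 → ∀ α > (0:ℝ),
      ∃ w : Z, ‖w‖ ≤ 1 ∧ F w > ‖F‖ - α ∧ ‖z + w‖ > 2 - ε) :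
    ∀ (E : Subspace ℝ Z), FiniteDimensional ℝ E →
      ∀ F : Z →L[ℝ] ℝ, F ≠ 0 → ∀ α > (0:ℝ),
      ∀ T : X →L[ℝ] Y →L[ℝ] ℝ, ∀ ε : ℝ, 0 < ε → ε < 1 →
      ∃ (x : X) (y : Y) (G : X →L[ℝ] Y →L[ℝ] ℝ),
        ‖x‖ = 1 ∧ ‖y‖ = 1 ∧ ‖t x y‖ ≤ 1 ∧ F (t x y) > ‖F‖ - α ∧
        (∀ e ∈ E, ι G e = ι T e) ∧ G x y = ‖T‖ ∧ ‖G‖ ≤ (1 - ε)⁻¹ * ‖T‖ := by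
  intro E hE F hF α hα T ε hε hε1
  obtain ⟨F', hF', α', hα', h⟩ :=
    HasDaugavetSlices.exists_subslice_finiteDimensional hDP hε hε1 E hF hα
  have htensor : ∀ x y, ‖x‖ = 1 → ‖y‖ = 1 → ‖t x y‖ ≤ 1 := fun x y hx hy => by
    rw [← mem_closedBall_zero_iff, hball]
    exact subset_closure (subset_convexHull ℝ _ ⟨x, y, hx, hy, rfl⟩)
  obtain ⟨x, y, hx, hy, hxy⟩ : ∃ x y, ‖x‖ = 1 ∧ ‖y‖ = 1 ∧ F' (t x y) > ‖F'‖ - α' := by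
    by_contra! hcon
    have hsub : Metric.closedBall (0 : Z) 1 ⊆ {z | F' z ≤ ‖F'‖ - α'} := by
      rw [hball]
      refine closure_minimal (convexHull_min ?_ ?_) (isClosed_le F'.continuous continuous_const)
      · rintro _ ⟨x, y, hx, hy, rfl⟩
        exact hcon x y hx hy
      · exact convex_halfSpace_le F'.isBoundedLinearMap.toIsLinearMap _
    obtain ⟨z, hz⟩ := DFunLike.ne_iff.mp hF
    have hz0 : z ≠ 0 := by rintro rfl; simp at hz
    obtain ⟨w, hw, hFw, -⟩ :=
      hDP 1 one_pos (‖z‖⁻¹ • z) (by simp [norm_smul, hz0]) F' hF' α' hα'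
    exact absurd (hsub (mem_closedBall_zero_iff.mpr hw)) (not_le.mpr hFw)
  obtain ⟨hFxy, hE'⟩ := h _ (htensor x y hx hy) hxy
  obtain ⟨G, hGE, hGv, hGn⟩ := exists_dual_eqOn_and_apply_eq_norm E (t x y) hε1 hE' (ι T)
  refine ⟨x, y, ι.symm G, hx, hy, htensor x y hx hy, hFxy, by simpa using hGE, ?_, ?_⟩
  · rw [← hι, ι.apply_symm_apply, hGv, ι.norm_map]
  · rwa [ι.symm.norm_map, ← ι.norm_map T]
end
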